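/- For every τ ∈ T_0, writing M_loc τ = Σ_i a_i τ_i with pairwise distinct decorated trees τ_i ∈ T_0^X and coefficients a_i, one has M_loc τ / S(τ) = Σ_i τ_i / S(τ_i); equivalently a_i · S(τ_i) = S(τ) for every i. -/

import Mathlib

noncomputable section
open scoped BigOperators
attribute [local instance] Classical.propDecidable

namespace Flow

/-- Multi-indices in `ℕ^{d+1}`. -/
abbrev Multi (d : ℕ) := Fin (d + 1) → ℕ

/-- `k! = ∏ᵢ (kᵢ)!`. -/
def mfact {d : ℕ} (k : Multi d) : ℕ := ∏ i, (k i).factorial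

/-- multinomial binomial coefficient `binom(k,j) = ∏ᵢ binom(kᵢ,jᵢ)`. -/
def mbinom {d : ℕ} (k j : Multi d) : ℕ := ∏ i, (k i).choose (j i)

/-- `|k|_𝔰` for the parabolic scaling `𝔰 = (λ,1,…,1)`. -/
def sNorm {d : ℕ} (lam : ℝ) (k : Multi d) : ℝ :=
  lam * (k 0 : ℝ) + ∑ i, (if i = (0 : Fin (d + 1)) then 0 else (k i : ℝ))

/-- Planar representatives of decorated rooted trees.  A node carries:
`noise` (the presence of a noise-type edge `Ξ` at this node, i.e. the symbol `ζ_l`),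
`grayNoise` (a grey noise symbol `grayΞ`), a polynomial decoration `X^k`, a marker `Y^𝔳`,
and a list of branches.  A branch is either `Sum.inl ((isPrime, a), t)`,
an integration edge `ℐ_a` (`isPrime = false`) or `ℐ'_a` (`isPrime = true`) with subtree `t`,
or `Sum.inr (a, k)`, a grey integration leaf `grayℐ_a(X^k)`. -/
inductive Tree (d : ℕ) : Type where
  | node (noise grayNoise : Bool) (k : Multi d) (v : Bool)
      (bs : List (((Bool × Multi d) × Tree d) ⊕ (Multi d × Multi d)))

abbrev Branch (d : ℕ) := ((Bool × Multi d) × Tree d) ⊕ (Multi d × Multi d)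

namespace Tree

variable {d : ℕ}

def intB (a : Multi d) (t : Tree d) : Branch d := Sum.inl ((false, a), t)
def intPB (a : Multi d) (t : Tree d) : Branch d := Sum.inl ((true, a), t)
def grayB (a k : Multi d) : Branch d := Sum.inr (a, k)

def atom (l g : Bool) (k : Multi d) (v : Bool) : Tree d := .node l g k v []
/-- `𝟏·Y^𝔳`. -/
def one (v : Bool) : Tree d := atom false false 0 v
/-- `Ξ·Y^𝔳`. -/
def xi (v : Bool) : Tree d := atom true false 0 v
/-- `X^k`. -/
def poly (k : Multi d) : Tree d := atom false false k false
/-- the planted tree `ℐ_a(t)`. -/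
def plantI (a : Multi d) (t : Tree d) : Tree d := .node false false 0 false [intB a t]
/-- the planted tree `ℐ'_a(t)`. -/
def plantIP (a : Multi d) (t : Tree d) : Tree d := .node false false 0 false [intPB a t]
/-- the planted grey tree `grayℐ_a(X^k)`. -/
def plantG (a k : Multi d) : Tree d := .node false false 0 false [grayB a k]

/-- Tree product: identification of the roots, adding the decorations. -/
def mul : Tree d → Tree d → Tree d
  | .node l g k v bs, .node l' g' k' v' bs' =>
      .node (l || l') (g || g') (k + k') (v || v') (bs ++ bs')

/-- `ζ_l Y^𝔳 ∏ᵢ ℐ_{aᵢ}(τᵢ)`. -/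
def mk0 (l : Bool) (v : Bool) (bs : List (Multi d × Tree d)) : Tree d :=
  .node l false 0 v (bs.map fun p => intB p.1 p.2)

/-- `ζ_l X^k Y^𝔳 ∏ᵢ ℐ_{aᵢ}(τᵢ)`. -/
def mkX (l : Bool) (k : Multi d) (v : Bool) (bs : List (Multi d × Tree d)) : Tree d :=
  .node l false k v (bs.map fun p => intB p.1 p.2)

end Tree

namespace Tree
variable {d : ℕ}

/-- Lift of a relation on trees to branches: equality of edge labels plus the
relation on subtrees. -/
def BRel (r : Tree d → Tree d → Prop) : Branch d → Branch d → Prop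
  | Sum.inl ((p, a), t), Sum.inl ((p', a'), t') => p = p' ∧ a = a' ∧ r t t'
  | Sum.inr x, Sum.inr y => x = y
  | _, _ => False

/-- Fuelled version of non-planar equality of decorated trees. -/
def TEquivN : ℕ → Tree d → Tree d → Prop
  | 0, _, _ => False
  | n + 1, .node l g k v bs, .node l' g' k' v' bs' =>
      l = l' ∧ g = g' ∧ k = k' ∧ v = v' ∧
        ∃ e : Fin bs.length ≃ Fin bs'.length,
          ∀ i : Fin bs.length, BRel (TEquivN n) (bs.get i) (bs'.get (e i))

/-- Two planar trees represent the same non-planar decorated tree. -/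
def TEquiv (t t' : Tree d) : Prop := ∃ n, TEquivN n t t'

end Tree

/-- Non-planar decorated trees. -/
abbrev QTree (d : ℕ) := Quot (@Tree.TEquiv d)

/-- The class of a planar representative. -/
def qk {d : ℕ} (t : Tree d) : QTree d := Quot.mk _ t

/-- A choice of planar representative. -/
def qout {d : ℕ} (c : QTree d) : Tree d := (Quot.exists_rep c).choose

namespace Tree

variable {d : ℕ}

/-- Fuelled symmetry factor. -/
def SfacN : ℕ → Tree d → ℕ
  | 0, _ => 1
  | n + 1, .node _ _ k _ bs =>
      mfact k *
        Nat.card {e : Equiv.Perm (Fin bs.length) //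
          ∀ i, BRel TEquiv (bs.get (e i)) (bs.get i)} *
        (bs.map fun b => match b with
          | Sum.inl (_, t) => SfacN n t
          | Sum.inr _ => 1).prod

/-- The symmetry factor `S(τ)`. -/
def Sfac (t : Tree d) : ℕ := SfacN (sizeOf t) t

/-- Fuelled degree. -/
def degN (α lam : ℝ) : ℕ → Tree d → ℝ
  | 0, _ => 0
  | n + 1, .node l _ k _ bs =>
      (if l then α else 0) + sNorm lam k +
        (bs.map fun b => match b with
          | Sum.inl ((p, a), t) => degN α lam n t + (if p then 0 else lam) - sNorm lam a
          | Sum.inr _ => 0).sum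

/-- The degree of a decorated tree (`α` is the regularity of the noise,
`lam` the order `λ` of the operator). -/
def deg (α lam : ℝ) (t : Tree d) : ℝ := degN α lam (sizeOf t) t

/-- Fuelled number of `ℐ'`-edges. -/
def primeCountN : ℕ → Tree d → ℕ
  | 0, _ => 0
  | n + 1, .node _ _ _ _ bs =>
      (bs.map fun b => match b with
        | Sum.inl ((p, _), t) => (if p then 1 else 0) + primeCountN n t
        | Sum.inr _ => 0).sum

def primeCount (t : Tree d) : ℕ := primeCountN (sizeOf t) t

/-- Fuelled shape predicate; the flags allow polynomial decorations, grey
decorations and `ℐ'`-edges respectively. -/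
def ShapeN (aP aG aPr : Bool) : ℕ → Tree d → Prop
  | 0, _ => False
  | n + 1, .node _ g k _ bs =>
      (aG = true ∨ g = false) ∧ (aP = true ∨ k = 0) ∧
        ∀ b ∈ bs,
          (∃ p a t, b = Sum.inl ((p, a), t) ∧ (aPr = true ∨ p = false) ∧
              ShapeN aP aG aPr n t) ∨
            (aG = true ∧ ∃ x, b = Sum.inr x)

def Shape (aP aG aPr : Bool) (t : Tree d) : Prop := ∃ n, ShapeN aP aG aPr n t

/-- `T_0`: only `ℐ`- and `Ξ`-edges, trivial polynomial decorations. -/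
def IsT0 (t : Tree d) : Prop := Shape false false false t
/-- `T_0^X`: polynomial decorations allowed. -/
def IsT0X (t : Tree d) : Prop := Shape true false false t
/-- `T_0^𝔤`: grey decorations allowed. -/
def IsT0g (t : Tree d) : Prop := Shape false true false t
/-- `T_0^{X,𝔤}`. -/
def IsT0Xg (t : Tree d) : Prop := Shape true true false t
/-- `T_1`: at most one `ℐ'`-edge. -/
def IsT1 (t : Tree d) : Prop := Shape false false true t ∧ primeCount t ≤ 1
/-- `T_1^X`. -/
def IsT1X (t : Tree d) : Prop := Shape true false true t ∧ primeCount t ≤ 1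

/-- Fuelled predicate: every node carries the marker `Y^{v₀}`. -/
def VAllN (v0 : Bool) : ℕ → Tree d → Prop
  | 0, _ => False
  | n + 1, .node _ _ _ v bs =>
      v = v0 ∧ ∀ b ∈ bs, ∀ pa t, b = Sum.inl (pa, t) → VAllN v0 n t

def VAll (v0 : Bool) (t : Tree d) : Prop := ∃ n, VAllN v0 n t

/-- Fuelled predicate: all edge decorations are `0`. -/
def Dec0N : ℕ → Tree d → Prop
  | 0, _ => False
  | n + 1, .node _ _ _ _ bs =>
      ∀ b ∈ bs, ∀ pa t, b = Sum.inl (pa, t) → (pa.2 = (0 : Multi d) ∧ Dec0N n t)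

def Dec0 (t : Tree d) : Prop := ∃ n, Dec0N n t

/-- Fuelled predicate: the tree contains a grey symbol. -/
def hasGrayN : ℕ → Tree d → Prop
  | 0, _ => False
  | n + 1, .node _ g _ _ bs =>
      g = true ∨ ∃ b ∈ bs,
        (∃ x, b = Sum.inr x) ∨ (∃ pa t, b = Sum.inl (pa, t) ∧ hasGrayN n t)

def HasGray (t : Tree d) : Prop := ∃ n, hasGrayN n t

/-- Fuelled inverse of the grey decorations (`graydown`): erase `grayΞ`,
transfer the polynomial of each grey edge to the node decoration. -/
def graydownN : ℕ → Tree d → Tree d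
  | 0, t => t
  | n + 1, .node l _ k v bs =>
      .node l false
        (k + (bs.map fun b => match b with
          | Sum.inr (_, kk) => kk
          | _ => 0).sum) v
        (bs.filterMap fun b => match b with
          | Sum.inl ((p, a), t) => some (Sum.inl ((p, a), graydownN n t))
          | Sum.inr _ => none)

def graydown (t : Tree d) : Tree d := graydownN (sizeOf t) t

end Tree

/-! ### Formal linear combinations of decorated trees -/

/-- A (possibly infinite) formal linear combination of non-planar decorated trees. -/
abbrev Ser (d : ℕ) := QTree d → ℝ

/-- A formal linear combination of tensor products of decorated trees. -/
abbrev Ser2 (d : ℕ) := QTree d × QTree d → ℝ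

/-- The basis element given by a planar tree. -/
def dqT {d : ℕ} (t : Tree d) : Ser d := fun x => if x = qk t then 1 else 0

/-- The basis element given by a class. -/
def dqC {d : ℕ} (c : QTree d) : Ser d := fun x => if x = c then 1 else 0

/-- The basis element `s ⊗ t`. -/
def dq2 {d : ℕ} (s t : Tree d) : Ser2 d := fun x => if x = (qk s, qk t) then 1 else 0

/-- Linear extension of a tree-indexed family of series to series. -/
def extT {d : ℕ} (F : QTree d → Ser d) (S : Ser d) : Ser d :=
  fun x => ∑ᶠ c : QTree d, S c * F c x

/-- Linear extension, with values in tensors. -/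
def extS2 {d : ℕ} (F : QTree d → Ser2 d) (S : Ser d) : Ser2 d :=
  fun x => ∑ᶠ c : QTree d, S c * F c x

/-- Apply linear maps in each tensor slot. -/
def ap2 {d : ℕ} (F G : QTree d → Ser d) (S : Ser2 d) : Ser2 d :=
  fun x => ∑ᶠ p : QTree d × QTree d, S p * F p.1 x.1 * G p.2 x.2

/-- `(id ⊗ f)` for a map `f` on planar trees. -/
def mapSnd {d : ℕ} (f : Tree d → Tree d) (S : Ser2 d) : Ser2 d :=
  fun x => ∑ᶠ p : QTree d × QTree d,
    S p * (if x.1 = p.1 ∧ x.2 = qk (f (qout p.2)) then 1 else 0)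

/-- `(f ⊗ id)` for a map `f` on planar trees. -/
def mapFst {d : ℕ} (f : Tree d → Tree d) (S : Ser2 d) : Ser2 d :=
  fun x => ∑ᶠ p : QTree d × QTree d,
    S p * (if x.2 = p.2 ∧ x.1 = qk (f (qout p.1)) then 1 else 0)

/-- `(f ⊗ id)` killing the trees containing grey symbols (the convention
`ℐ_a(τ) = 0` for `τ` containing a grey symbol). -/
def mapFstKill {d : ℕ} (f : Tree d → Tree d) (S : Ser2 d) : Ser2 d :=
  fun x => ∑ᶠ p : QTree d × QTree d,
    S p * (if ¬ Tree.HasGray (qout p.1) ∧ x.2 = p.2 ∧ x.1 = qk (f (qout p.1)) then 1 else 0)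

/-- Product of series (bilinear extension of the tree product). -/
def mulS {d : ℕ} (A B : Ser d) : Ser d :=
  fun x => ∑ᶠ p : QTree d × QTree d,
    A p.1 * B p.2 * (if x = qk (Tree.mul (qout p.1) (qout p.2)) then 1 else 0)

/-- Product of tensor series. -/
def mul2 {d : ℕ} (A B : Ser2 d) : Ser2 d :=
  fun x => ∑ᶠ p : (QTree d × QTree d) × (QTree d × QTree d),
    A p.1 * B p.2 *
      (if x.1 = qk (Tree.mul (qout p.1.1) (qout p.2.1)) ∧
          x.2 = qk (Tree.mul (qout p.1.2) (qout p.2.2)) then 1 else 0)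

/-- A branch specification: a concrete grey leaf, or an edge whose subtree is a series. -/
inductive BSpec (d : ℕ) where
  | ser (isP : Bool) (a : Multi d) (S : Ser d)
  | gray (a k : Multi d)

def BSpec.coeff {d : ℕ} : BSpec d → QTree d → ℝ
  | .ser _ _ S, c => S c
  | .gray _ _, c => if c = qk (Tree.one false) then 1 else 0

def BSpec.toBranch {d : ℕ} : BSpec d → QTree d → Branch d
  | .ser p a _, c => Sum.inl ((p, a), qout c)
  | .gray a k, _ => Tree.grayB a k

/-- The tree `node(l,g,k,v; branches)` where the subtree of each (non-grey)
branch is drawn from a series; this is the multilinear extension of the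
node-building operation to series. -/
def nodeSer {d : ℕ} (l g : Bool) (k : Multi d) (v : Bool) (specs : List (BSpec d)) : Ser d :=
  fun x => ∑ᶠ cs : List (QTree d),
    if cs.length = specs.length then
      (List.zipWith BSpec.coeff specs cs).prod *
        dqT (Tree.node l g k v (List.zipWith BSpec.toBranch specs cs)) x
    else 0

/-- Branch specifications of a list of (decoration, subtree) pairs. -/
def specsOf {d : ℕ} (bs : List (Multi d × Tree d)) : List (BSpec d) :=
  bs.map fun p => BSpec.ser false p.1 (dqT p.2)

/-- Branch specifications of a list of branches. -/
def specsOfB {d : ℕ} (bs : List (Branch d)) : List (BSpec d) :=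
  bs.map fun b => match b with
    | Sum.inl ((p, a), t) => BSpec.ser p a (dqT t)
    | Sum.inr ak => BSpec.gray ak.1 ak.2

/-- The symmetry-factor pairing `⟨σ,τ⟩ = S(τ) 𝟙_{σ=τ}`, extended bilinearly. -/
def pairS {d : ℕ} (A B : Ser d) : ℝ :=
  ∑ᶠ c : QTree d, A c * B c * (Tree.Sfac (qout c) : ℝ)

/-- The pairing on tensors, `⟨σ₁⊗σ₂, τ₁⊗τ₂⟩ = ⟨σ₁,τ₁⟩⟨σ₂,τ₂⟩`. -/
def pair2 {d : ℕ} (A B : Ser2 d) : ℝ :=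
  ∑ᶠ p : QTree d × QTree d,
    A p * B p * (Tree.Sfac (qout p.1) : ℝ) * (Tree.Sfac (qout p.2) : ℝ)

/-- Symmetry factor of a class. -/
def SQ {d : ℕ} (c : QTree d) : ℕ := Tree.Sfac (qout c)

/-- Degree of a class. -/
def degQ {d : ℕ} (α lam : ℝ) (c : QTree d) : ℝ := Tree.deg α lam (qout c)

def IsT0Q {d : ℕ} (c : QTree d) : Prop := ∃ t, qk t = c ∧ Tree.IsT0 t
/-- classes of trees in `T_0^*` (marker `𝔳 = 1` everywhere). -/
def IsT0starQ {d : ℕ} (c : QTree d) : Prop := ∃ t, qk t = c ∧ Tree.IsT0 t ∧ Tree.VAll true t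
/-- classes of trees in `T_0^{X,*}`. -/
def IsT0XstarQ {d : ℕ} (c : QTree d) : Prop := ∃ t, qk t = c ∧ Tree.IsT0X t ∧ Tree.VAll true t


/-! ### Defining equations of the maps on decorated trees -/

/-- Defining recursion of the localisation map `M_loc`:
`M_loc (ζ_l Y^𝔳 ∏ᵢ ℐ_{aᵢ}(τᵢ) ∏ⱼ grayℐ_{bⱼ}(X^{kⱼ}))
  = Σ_k (X^k/k!) ζ_l Y^𝔳 ∏ᵢ ℐ_{aᵢ}(M_loc τᵢ) ∏ⱼ grayℐ_{bⱼ}(X^{kⱼ})`. -/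
def MlocEqs {d : ℕ} (Mloc : QTree d → Ser d) : Prop :=
  ∀ (l g : Bool) (v : Bool) (bs : List (Branch d)),
    Tree.IsT0g (Tree.node l g 0 v bs) →
    Mloc (qk (Tree.node l g 0 v bs)) = fun x =>
      ∑ᶠ k : Multi d, (1 / (mfact k : ℝ)) *
        nodeSer l g k v (bs.map fun b => match b with
          | Sum.inl ((p, a), t) => BSpec.ser p a (Mloc (qk t))
          | Sum.inr ak => BSpec.gray ak.1 ak.2) x

/-- Defining recursion of the abstract derivative `↑_μ`:
it vanishes on trees with no edge and
`↑_μ (ζ_l Y^𝔳 ∏ᵢ ℐ_{aᵢ}(τᵢ)) = ζ_l Y^𝔳 Σᵢ (ℐ'_{aᵢ}(τᵢ) + ℐ_{aᵢ}(↑_μ τᵢ)) ∏_{j≠i} ℐ_{aⱼ}(τⱼ)`. -/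
def UpEqs {d : ℕ} (up : QTree d → Ser d) : Prop :=
  ∀ (l : Bool) (v : Bool) (bs : List (Multi d × Tree d)), (∀ p ∈ bs, Tree.IsT0 p.2) →
    up (qk (Tree.mk0 l v bs)) =
      (∑ i : Fin bs.length,
        dqT (Tree.node l false 0 v
          ((bs.map fun p => Tree.intB p.1 p.2).set i.1
            (Tree.intPB (bs.get i).1 (bs.get i).2)))) +
      ∑ i : Fin bs.length,
        nodeSer l false 0 v
          ((specsOf bs).set i.1 (BSpec.ser false (bs.get i).1 (up (qk (bs.get i).2))))

/-- Defining recursion of the grafting operator `↷_a` (grafting with an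
`ℐ'_a`-edge on the nodes with marker `𝔳 = 1`; grafting at the root switches the
marker of the root to `0`). -/
def GraftEqs {d : ℕ} (graft : Multi d → QTree d → QTree d → Ser d) : Prop :=
  ∀ (a : Multi d) (σ : Tree d), Tree.IsT0 σ →
    ∀ (l : Bool) (bs : List (Multi d × Tree d)), (∀ p ∈ bs, Tree.IsT0 p.2) →
      (graft a (qk σ) (qk (Tree.mk0 l true bs)) =
        dqT (Tree.node l false 0 false
          (Tree.intPB a σ :: bs.map fun p => Tree.intB p.1 p.2)) +
        ∑ i : Fin bs.length,
          nodeSer l false 0 true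
            ((specsOf bs).set i.1
              (BSpec.ser false (bs.get i).1 (graft a (qk σ) (qk (bs.get i).2))))) ∧
      (graft a (qk σ) (qk (Tree.mk0 l false bs)) =
        ∑ i : Fin bs.length,
          nodeSer l false 0 false
            ((specsOf bs).set i.1
              (BSpec.ser false (bs.get i).1 (graft a (qk σ) (qk (bs.get i).2)))))

/-- Defining equations of the grafting at the root only, `↷_a^{root}`. -/
def GraftRootEqs {d : ℕ} (graftR : Multi d → QTree d → QTree d → Ser d) : Prop :=
  ∀ (a : Multi d) (σ : Tree d) (l : Bool) (v : Bool) (bs : List (Multi d × Tree d)),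
    graftR a (qk σ) (qk (Tree.mk0 l v bs)) =
      if v then
        dqT (Tree.node l false 0 false
          (Tree.intPB a σ :: bs.map fun p => Tree.intB p.1 p.2))
      else 0

/-- Defining recursion of the grey grafting `gray↷_a` on `𝒯_0^X`. -/
def GAEqs {d : ℕ} (GA : Multi d → QTree d → Ser d) : Prop :=
  ∀ (a : Multi d) (l : Bool) (k : Multi d) (v : Bool) (bs : List (Multi d × Tree d)),
    (∀ p ∈ bs, Tree.IsT0X p.2) →
    GA a (qk (Tree.mkX l k v bs)) =
      (fun x => (if v = true then (1 : ℝ) else 0) *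
        ∑ᶠ j : Multi d, if j ≤ a then
          (mbinom k j : ℝ) *
            dqT (Tree.node l false (k - j) v
              (Tree.grayB (a - j) j :: bs.map fun p => Tree.intB p.1 p.2)) x
        else 0) +
      ∑ i : Fin bs.length,
        nodeSer l false k v
          ((specsOf bs).set i.1 (BSpec.ser false (bs.get i).1 (GA a (qk (bs.get i).2))))

/-- Defining recursion of the grey grafting `gray↷_{a,k}` on `𝒯_0^𝔤`. -/
def GAKEqs {d : ℕ} (GAK : Multi d → Multi d → QTree d → Ser d) : Prop :=
  ∀ (a k0 : Multi d) (l g : Bool) (v : Bool) (bs : List (Branch d)),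
    Tree.IsT0g (Tree.node l g 0 v bs) →
    GAK a k0 (qk (Tree.node l g 0 v bs)) =
      (fun x => (if v = true then (1 : ℝ) else 0) *
        dqT (Tree.node l g 0 v (Tree.grayB a k0 :: bs)) x) +
      ∑ i : Fin bs.length,
        (match bs.get i with
          | Sum.inl ((false, ai), ti) =>
              nodeSer l g 0 v ((specsOfB bs).set i.1
                (BSpec.ser false ai (GAK a k0 (qk ti))))
          | _ => 0)

/-- Defining recursion of the coproduct `Δ_a`, dual to `↷_a`. -/
def DaEqs {d : ℕ} (Da : Multi d → QTree d → Ser2 d) : Prop :=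
  ∀ a : Multi d,
    (Da a (qk (Tree.one false)) = dq2 (Tree.one false) (Tree.one false)) ∧
    (Da a (qk (Tree.xi false)) = dq2 (Tree.xi false) (Tree.one true)) ∧
    (∀ (b : Multi d) (t : Tree d), Tree.IsT0 t →
      Da a (qk (Tree.plantIP b t)) =
        mapSnd (Tree.plantI b) (Da a (qk t)) +
          (if a = b then dq2 t (Tree.one true) else 0)) ∧
    (∀ (b : Multi d) (t : Tree d), Tree.IsT0 t →
      Da a (qk (Tree.plantI b t)) = mapSnd (Tree.plantI b) (Da a (qk t))) ∧
    (∀ s t : Tree d, Tree.IsT1 s → Tree.IsT1 t → Tree.VAll false s → Tree.VAll false t →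
      Da a (qk (Tree.mul s t)) =
        mul2 (Da a (qk s)) (dq2 (Tree.one false) t) +
          mul2 (dq2 (Tree.one false) s) (Da a (qk t)))

/-- Defining recursion of the elementary-cuts coproduct `Δ_1`. -/
def D1Eqs {d : ℕ} (D1 : QTree d → Ser2 d) : Prop :=
  (D1 (qk (Tree.one false)) = dq2 (Tree.one false) (Tree.one false)) ∧
  (D1 (qk (Tree.xi false)) = dq2 (Tree.xi false) (Tree.one true)) ∧
  (∀ (a : Multi d) (t : Tree d), Tree.IsT0 t →
    D1 (qk (Tree.plantI a t)) =
      mapSnd (Tree.plantI a) (D1 (qk t)) + dq2 (Tree.plantIP a t) (Tree.one true)) ∧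
  (∀ s t : Tree d, Tree.IsT0 s → Tree.IsT0 t → Tree.VAll false s → Tree.VAll false t →
    D1 (qk (Tree.mul s t)) =
      mul2 (D1 (qk s)) (dq2 (Tree.one false) t) +
        mul2 (dq2 (Tree.one false) s) (D1 (qk t)))

/-- Defining recursion of the extraction-at-the-root coproduct `Δ_r`. -/
def DrEqs {d : ℕ} (Dr : QTree d → Ser2 d) : Prop :=
  (∀ v : Bool, Dr (qk (Tree.one v)) = dq2 (Tree.one v) (Tree.one false)) ∧
  (Dr (qk (Tree.xi false)) =
    dq2 (Tree.atom false true 0 false) (Tree.xi false) + dq2 (Tree.xi false) (Tree.one false)) ∧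
  (∀ i : Fin (d + 1),
    Dr (qk (Tree.poly (Pi.single i 1))) =
      dq2 (Tree.one false) (Tree.poly (Pi.single i 1)) +
        dq2 (Tree.poly (Pi.single i 1)) (Tree.one false)) ∧
  (∀ (a : Multi d) (t : Tree d), Tree.IsT0X t →
    Dr (qk (Tree.plantI a t)) =
      mapFstKill (Tree.plantI a) (Dr (qk t)) +
        fun x => ∑ᶠ k : Multi d,
          (1 / (mfact k : ℝ)) * dq2 (Tree.plantG a k) (Tree.plantI (a + k) t) x) ∧
  (∀ (a : Multi d) (t : Tree d), Tree.IsT0X t →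
    Dr (qk (Tree.plantIP a t)) = fun x =>
      ∑ᶠ k : Multi d,
        (1 / (mfact k : ℝ)) * dq2 (Tree.plantG a k) (Tree.plantIP (a + k) t) x) ∧
  (∀ s t : Tree d, Tree.IsT1X s → Tree.IsT1X t →
    Dr (qk (Tree.mul s t)) = mul2 (Dr (qk s)) (Dr (qk t)))

/-- Defining recursion of the map `⇑` (summing over all edge decorations). -/
def Up2Eqs {d : ℕ} (Up2 : QTree d → Ser d) : Prop :=
  (∀ (l : Bool) (v : Bool), Up2 (qk (Tree.atom l false 0 v)) = dqT (Tree.atom l false 0 v)) ∧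
  (∀ t : Tree d, Tree.IsT1 t → Tree.Dec0 t →
    (Up2 (qk (Tree.plantI 0 t)) = fun x =>
      ∑ᶠ a : Multi d, nodeSer false false 0 false [BSpec.ser false a (Up2 (qk t))] x) ∧
    (Up2 (qk (Tree.plantIP 0 t)) = fun x =>
      ∑ᶠ a : Multi d, nodeSer false false 0 false [BSpec.ser true a (Up2 (qk t))] x)) ∧
  (∀ s t : Tree d, Tree.IsT1 s → Tree.IsT1 t → Tree.Dec0 s → Tree.Dec0 t →
    Up2 (qk (Tree.mul s t)) = mulS (Up2 (qk s)) (Up2 (qk t)))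


namespace Tree
variable {d : ℕ}

/-- Fuelled list of the planar trees `↑_μ^e τ`, for `e` ranging over the
`ℐ`-edges of `τ`: the type of the edge `e` is switched from `ℐ` to `ℐ'`. -/
def switchesN : ℕ → Tree d → List (Tree d)
  | 0, _ => []
  | n + 1, .node l g k v bs =>
      (List.finRange bs.length).flatMap fun i =>
        match bs.get i with
        | Sum.inl ((false, a), t) =>
            Tree.node l g k v (bs.set i.1 (intPB a t)) ::
              (switchesN n t).map fun t' => Tree.node l g k v (bs.set i.1 (intB a t'))
        | _ => []

/-- The list of the planar trees `↑_μ^e τ`, `e ∈ E_τ` an `ℐ`-edge of `τ`. -/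
def switches (t : Tree d) : List (Tree d) := switchesN (sizeOf t) t

end Tree

/-- The insertion product `ℐ'_a(σ) ↷ τ = σ ↷_a τ` (vanishing on anything that
is not a planted tree `ℐ'_a(σ)`), as a pairing of the two components of a tensor. -/
def insApply {d : ℕ} (graft : Multi d → QTree d → QTree d → Ser d)
    (c₁ c₂ : QTree d) : Ser d :=
  match qout c₁ with
  | .node false false k false [Sum.inl ((true, a), σ)] =>
      if k = 0 then graft a (qk σ) c₂ else 0
  | _ => 0

/-- The insertion product applied to a tensor series. -/
def insProd {d : ℕ} (graft : Multi d → QTree d → QTree d → Ser d)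
    (S : Ser2 d) : Ser d :=
  fun x => ∑ᶠ p : QTree d × QTree d, S p * insApply graft p.1 p.2 x

/-- Recognise the class of a planted tree `ℐ_0(σ)` and return the class of `σ`. -/
def strip0 {d : ℕ} (c : QTree d) : Option (QTree d) :=
  match qout c with
  | .node false false k false [Sum.inl ((false, a), σ)] =>
      if k = 0 ∧ a = 0 then some (qk σ) else none
  | _ => none


namespace Tree
variable {d : ℕ}
/-- Decorations of the `ℐ`/`ℐ'`-edges at the root. -/
def intDecs (bs : List (Branch d)) : List (Multi d) :=
  bs.filterMap fun b => match b with
    | Sum.inl ((_, a), _) => some a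
    | Sum.inr _ => none
/-- Decorations of the grey edges at the root. -/
def grayDecs (bs : List (Branch d)) : List (Multi d) :=
  bs.filterMap fun b => match b with
    | Sum.inr (a, _) => some a
    | Sum.inl _ => none
/-- Subtrees of the `ℐ`/`ℐ'`-edges at the root. -/
def intSubs (bs : List (Branch d)) : List (Tree d) :=
  bs.filterMap fun b => match b with
    | Sum.inl (_, t) => some t
    | Sum.inr _ => none
end Tree

end Flow

namespace Flow

/-!
A tree `x` occurring in `M_loc τ` determines `τ`: it is obtained from `x` by erasing the monomials.
Hence, if `τ` has branches `bᵢ`, the tuples of subtrees drawn from the series `M_loc bᵢ` which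
assemble to `x` are the rearrangements of a single one under the permutations preserving the tuple
of the `bᵢ`. By orbit–stabiliser their number is the quotient of the factors `∏ βᵢ!` in `S(τ)` and
`S(x)`. All of them contribute the same product of coefficients, which is the quotient of the
symmetry factors of the subtrees by induction, and `1/k!` cancels the factor `k!` in `S(x)`.
-/

open Finset

section Combinatorics

variable {ι κ α Λ γ R : Type*} [Fintype ι] [Fintype κ]

/-- The product `∏ βₓ!` over the distinct elements `x` of a multiset, `βₓ` being the multiplicity
of `x`: the number of permutations of the positions of a multiset that preserve it. -/
def symmetryNumber (M : Multiset α) : ℕ := ∏ x ∈ M.toFinset, (M.count x).factorial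

theorem card_fiber_eq_count_map_univ (f : ι → α) (x : α) :
    Fintype.card {i // f i = x} = (univ.val.map f).count x := by
  rw [Fintype.card_subtype, Multiset.count_map, card_def, filter_val]
  simp only [eq_comm]

theorem card_perm_comp_eq_self (f : ι → α) :
    Nat.card {σ : Equiv.Perm ι // f ∘ σ = f} = symmetryNumber (univ.val.map f) := by
  rw [Nat.card_eq_fintype_card, DomMulAct.stabilizer_card']
  simp only [card_fiber_eq_count_map_univ]
  rfl

theorem exists_equiv_iff_map_univ_eq {f : ι → α} {g : κ → α} :
    (∃ e : ι ≃ κ, ∀ i, f i = g (e i)) ↔ univ.val.map f = univ.val.map g := by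
  constructor
  · rintro ⟨e, he⟩
    rw [← Multiset.map_univ_val_equiv e, Multiset.map_map]
    exact Multiset.map_congr rfl fun i _ => he i
  · intro h
    have fiber_card (x : α) : Fintype.card {i // f i = x} = Fintype.card {j // g j = x} := by
      rw [card_fiber_eq_count_map_univ, card_fiber_eq_count_map_univ, h]
    exact ⟨Equiv.ofFiberEquiv fun x => Fintype.equivOfCardEq (fiber_card x),
      fun i => (Equiv.ofFiberEquiv_map _ i).symm⟩

theorem map_univ_get_ofFn {n : ℕ} (f : α → γ) (b : Fin n → α) :
    (univ.val.map fun i => f ((List.ofFn b).get i)) = univ.val.map fun i => f (b i) :=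
  exists_equiv_iff_map_univ_eq.1
    ⟨finCongr List.length_ofFn, fun i => congrArg f (List.get_ofFn b i)⟩

theorem card_stabilizer_eq_symmetryNumber (f : ι → α) :
    Nat.card (MulAction.stabilizer (Equiv.Perm ι)ᵈᵐᵃ f) = symmetryNumber (univ.val.map f) := by
  rw [← card_perm_comp_eq_self]
  exact (Nat.card_congr (DomMulAct.mk.subtypeEquiv fun _ => Iff.rfl)).symm

theorem card_orbit_mul_symmetryNumber (label : α → Λ) (a : ι → α) (c : ι → γ)
    (hsep : ∀ i j, label (a i) = label (a j) → c i = c j → a i = a j) :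
    Nat.card (MulAction.orbit (MulAction.stabilizer (Equiv.Perm ι)ᵈᵐᵃ a) c) *
        symmetryNumber (univ.val.map fun i => (label (a i), c i)) =
      symmetryNumber (univ.val.map a) := by
  set H := MulAction.stabilizer (Equiv.Perm ι)ᵈᵐᵃ a
  set K := MulAction.stabilizer (Equiv.Perm ι)ᵈᵐᵃ fun i => (label (a i), c i)
  have le : K ≤ H := fun σ hσ => funext fun i => by
    have hi := congrFun hσ i
    exact hsep _ _ (congrArg Prod.fst hi) (congrArg Prod.snd hi)
  have stabilizer_eq : MulAction.stabilizer H c = K.subgroupOf H := by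
    ext σ
    have hσ : ∀ i, a (DomMulAct.mk.symm σ.1 i) = a i := congrFun σ.2
    refine ⟨fun h => funext fun i => ?_, fun h => funext fun i => congrArg Prod.snd (congrFun h i)⟩
    exact Prod.ext (congrArg label (hσ i)) (congrFun h i)
  rw [← card_stabilizer_eq_symmetryNumber, ← card_stabilizer_eq_symmetryNumber a,
    ← Nat.card_congr (Subgroup.subgroupOfEquivOfLe le).toEquiv, ← stabilizer_eq, ← Nat.card_prod]
  exact Nat.card_congr (MulAction.orbitProdStabilizerEquivGroup H c)

variable {label : α → Λ} {a : ι → α} {c c' : ι → γ}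

theorem mem_orbit_stabilizer_iff {r : α → γ → Prop}
    (hsep : ∀ i j x, label (a i) = label (a j) → r (a i) x → r (a j) x → a i = a j)
    (hc : ∀ i, r (a i) (c i)) :
    c' ∈ MulAction.orbit (MulAction.stabilizer (Equiv.Perm ι)ᵈᵐᵃ a) c ↔
      (∀ i, r (a i) (c' i)) ∧
        (univ.val.map fun i => (label (a i), c i)) = univ.val.map fun i => (label (a i), c' i) := by
  constructor
  · rintro ⟨σ, rfl⟩
    have hσ : ∀ i, a (DomMulAct.mk.symm σ.1 i) = a i := congrFun σ.2
    refine ⟨fun i => ?_, (exists_equiv_iff_map_univ_eq.1 ⟨DomMulAct.mk.symm σ.1, fun i => ?_⟩).symm⟩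
    · rw [← hσ i]
      exact hc _
    · exact Prod.ext (congrArg label (hσ i).symm) rfl
  · rintro ⟨hc', h⟩
    obtain ⟨e, he⟩ := exists_equiv_iff_map_univ_eq.2 h.symm
    refine ⟨⟨DomMulAct.mk e, funext fun i => ?_⟩, funext fun i => (congrArg Prod.snd (he i)).symm⟩
    have value_eq : c' i = c (e i) := congrArg Prod.snd (he i)
    exact (hsep i (e i) (c' i) (congrArg Prod.fst (he i)) (hc' i) (value_eq ▸ hc (e i))).symm

variable [CommSemiring R] {w : α → γ → R}

theorem prod_eq_of_mem_orbit_stabilizer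
    (h : c' ∈ MulAction.orbit (MulAction.stabilizer (Equiv.Perm ι)ᵈᵐᵃ a) c) :
    ∏ i, w (a i) (c' i) = ∏ i, w (a i) (c i) := by
  obtain ⟨σ, rfl⟩ := h
  have hσ : ∀ i, a (DomMulAct.mk.symm σ.1 i) = a i := congrFun σ.2
  rw [← Equiv.prod_comp (DomMulAct.mk.symm σ.1) fun i => w (a i) (c i)]
  simp only [hσ]
  rfl

theorem finsum_prod_mul_symmetryNumber
    (hsep : ∀ i j x, label (a i) = label (a j) → w (a i) x ≠ 0 → w (a j) x ≠ 0 → a i = a j)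
    (hc : ∀ i, w (a i) (c i) ≠ 0) :
    (∑ᶠ (c' : ι → γ) (_ : (univ.val.map fun i => (label (a i), c i)) =
          univ.val.map fun i => (label (a i), c' i)), ∏ i, w (a i) (c' i)) *
        symmetryNumber (univ.val.map fun i => (label (a i), c i)) =
      symmetryNumber (univ.val.map a) * ∏ i, w (a i) (c i) := by
  set O := MulAction.orbit (MulAction.stabilizer (Equiv.Perm ι)ᵈᵐᵃ a) c
  have summand_eq (c' : ι → γ) : (∑ᶠ _ : (univ.val.map fun i => (label (a i), c i)) =
      univ.val.map fun i => (label (a i), c' i), ∏ i, w (a i) (c' i)) =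
        ∑ᶠ _ : c' ∈ O, ∏ i, w (a i) (c i) := by
    have mem_O : c' ∈ O ↔ _ := mem_orbit_stabilizer_iff (r := (w · · ≠ 0)) hsep hc
    rw [finsum_eq_if, finsum_eq_if]
    split_ifs with hmap hO hO
    · exact prod_eq_of_mem_orbit_stabilizer hO
    · by_contra hprod
      exact hO (mem_O.2 ⟨fun i hi => hprod (prod_eq_zero (mem_univ i) hi), hmap⟩)
    · exact absurd (mem_O.1 hO).2 hmap
    · rfl
  have card_O := card_orbit_mul_symmetryNumber label a c fun i j hl hx =>
    hsep i j (c i) hl (hc i) (hx ▸ hc j)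
  have finite_perm : Finite (Equiv.Perm ι)ᵈᵐᵃ := .of_equiv _ DomMulAct.mk
  have finite_O : O.Finite := Set.finite_range _
  rw [finsum_congr summand_eq, finsum_mem_eq_finite_toFinset_sum _ finite_O, sum_const,
    nsmul_eq_mul, ← Set.ncard_eq_toFinset_card O finite_O, mul_right_comm, ← card_O, Nat.cast_mul]
  rfl

theorem finsum_list_length_eq {M : Type*} [AddCommMonoid M] (n : ℕ) (f : List α → M) :
    (∑ᶠ cs : List α, if cs.length = n then f cs else 0) = ∑ᶠ c : Fin n → α, f (List.ofFn c) := by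
  have mem_range (cs : List α) : cs ∈ Set.range (List.ofFn (n := n)) ↔ cs.length = n :=
    ⟨fun ⟨c, hc⟩ => hc ▸ List.length_ofFn, fun h => h ▸ ⟨cs.get, List.ofFn_get cs⟩⟩
  rw [← finsum_mem_range List.ofFn_injective]
  simp only [mem_range, finsum_eq_if]

theorem exists_ne_zero_of_finsum_ne_zero {M : Type*} [AddCommMonoid M] {f : α → M}
    (h : ∑ᶠ a, f a ≠ 0) : ∃ a, f a ≠ 0 := by
  contrapose! h
  exact finsum_eq_zero_of_forall_eq_zero h

end Combinatorics

namespace Tree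

variable {d : ℕ}

/-- The type of edges of decorated trees: `ℐ_a` or `ℐ'_a` for `Sum.inl (isPrime, a)`, and
`grayℐ_a(X^k)` for `Sum.inr (a, k)`. -/
abbrev EdgeLabel (d : ℕ) := (Bool × Multi d) ⊕ (Multi d × Multi d)

/-- The edge by which a branch is attached. -/
def branchLabel : Branch d → EdgeLabel d := Sum.map Prod.fst id

/-- The tree above the edge of a branch. A grey leaf is given the trivial tree, which is also the
tree on which `BSpec.coeff` is supported for a grey leaf. -/
def branchSubtree : Branch d → Tree d := Sum.elim Prod.snd fun _ => one false

/-- A branch up to non-planar equality: two branches have the same class iff they count as equal in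
the multiplicities `βᵢ` of the symmetry factor. -/
def branchClass (b : Branch d) : EdgeLabel d × QTree d := (branchLabel b, qk (branchSubtree b))

theorem sizeOf_branchSubtree_lt {bs : List (Branch d)} {b : Branch d} (hb : b ∈ bs)
    (l g : Bool) (k : Multi d) (v : Bool) :
    sizeOf (branchSubtree b) < sizeOf (node l g k v bs) := by
  have sizeOf_branch_lt := List.sizeOf_lt_of_mem hb
  rcases b with ⟨_, t⟩ | _ <;>
    simp only [branchSubtree, one, atom, Sum.elim_inl, Sum.elim_inr, Sum.inl.sizeOf_spec,
      Sum.inr.sizeOf_spec, Prod.mk.sizeOf_spec, node.sizeOf_spec, List.nil.sizeOf_spec,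
      Bool.sizeOf_eq_one] at sizeOf_branch_lt ⊢ <;>
    omega

theorem induction {P : Tree d → Prop}
    (node : ∀ l g k v bs, (∀ b ∈ bs, P (branchSubtree b)) → P (.node l g k v bs)) :
    ∀ t : Tree d, P t
  | .node l g k v bs => node l g k v bs fun b _ => induction node (branchSubtree b)
termination_by t => sizeOf t
decreasing_by exact sizeOf_branchSubtree_lt ‹_› l g k v

theorem BRel_monotone : Monotone (BRel (d := d)) := by
  rintro r s h (⟨_, t⟩ | _) (⟨_, t'⟩ | _) hb
  · exact ⟨hb.1, hb.2.1, h t t' hb.2.2⟩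
  all_goals exact hb

theorem TEquivN_monotone : Monotone (TEquivN (d := d)) := by
  refine monotone_nat_of_le_succ fun n => ?_
  induction n with
  | zero => exact fun _ _ => False.elim
  | succ n ih =>
    rintro ⟨l, g, k, v, bs⟩ ⟨l', g', k', v', bs'⟩ ⟨hl, hg, hk, hv, e, he⟩
    exact ⟨hl, hg, hk, hv, e, fun i => BRel_monotone ih _ _ (he i)⟩

theorem exists_BRel_TEquivN {b b' : Branch d} (h : BRel TEquiv b b') :
    ∃ n, BRel (TEquivN n) b b' := by
  rcases b with ⟨_, t⟩ | _ <;> rcases b' with ⟨_, t'⟩ | _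
  · obtain ⟨hp, ha, n, hn⟩ := h
    exact ⟨n, hp, ha, hn⟩
  all_goals exact ⟨0, h⟩

theorem TEquiv_node {l g l' g' : Bool} {k k' : Multi d} {v v' : Bool} {bs bs' : List (Branch d)} :
    TEquiv (node l g k v bs) (node l' g' k' v' bs') ↔
      l = l' ∧ g = g' ∧ k = k' ∧ v = v' ∧
        ∃ e : Fin bs.length ≃ Fin bs'.length, ∀ i, BRel TEquiv (bs.get i) (bs'.get (e i)) := by
  constructor
  · rintro ⟨_ | n, h⟩
    · exact h.elim
    · obtain ⟨hl, hg, hk, hv, e, he⟩ := h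
      exact ⟨hl, hg, hk, hv, e, fun i => BRel_monotone (fun _ _ ht => ⟨n, ht⟩) _ _ (he i)⟩
  · rintro ⟨hl, hg, hk, hv, e, he⟩
    choose n hn using fun i => exists_BRel_TEquivN (he i)
    refine ⟨univ.sup n + 1, hl, hg, hk, hv, e, fun i => ?_⟩
    exact BRel_monotone (TEquivN_monotone (le_sup (mem_univ i))) _ _ (hn i)

theorem BRel_refl {r : Tree d → Tree d → Prop} {b : Branch d}
    (h : r (branchSubtree b) (branchSubtree b)) : BRel r b b := by
  rcases b with ⟨_, t⟩ | _
  · exact ⟨rfl, rfl, h⟩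
  · rfl

theorem TEquiv_refl : ∀ t : Tree d, TEquiv t t :=
  induction fun _ _ _ _ bs ih =>
    TEquiv_node.2 ⟨rfl, rfl, rfl, rfl, Equiv.refl _, fun i => BRel_refl (ih _ (bs.get_mem i))⟩

theorem BRel_iff {r : Tree d → Tree d → Prop} (hr : ∀ t, r t t) {b b' : Branch d} :
    BRel r b b' ↔ branchLabel b = branchLabel b' ∧ r (branchSubtree b) (branchSubtree b') := by
  rcases b with ⟨⟨p, a⟩, t⟩ | x <;> rcases b' with ⟨⟨p', a'⟩, t'⟩ | x' <;>
    simp [BRel, branchLabel, branchSubtree, hr, and_assoc]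

theorem TEquiv_symm : ∀ {t t' : Tree d}, TEquiv t t' → TEquiv t' t := by
  intro t
  induction t using Tree.induction with
  | node l g k v bs ih =>
    rintro ⟨l', g', k', v', bs'⟩ h
    obtain ⟨hl, hg, hk, hv, e, he⟩ := TEquiv_node.1 h
    refine TEquiv_node.2 ⟨hl.symm, hg.symm, hk.symm, hv.symm, e.symm, fun j => ?_⟩
    obtain ⟨label_eq, subtree_equiv⟩ := (BRel_iff TEquiv_refl).1 (he (e.symm j))
    rw [e.apply_symm_apply] at label_eq subtree_equiv
    exact (BRel_iff TEquiv_refl).2 ⟨label_eq.symm, ih _ (bs.get_mem _) subtree_equiv⟩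

theorem TEquiv_trans : ∀ {t t' t'' : Tree d}, TEquiv t t' → TEquiv t' t'' → TEquiv t t'' := by
  intro t
  induction t using Tree.induction with
  | node l g k v bs ih =>
    rintro ⟨l', g', k', v', bs'⟩ ⟨l'', g'', k'', v'', bs''⟩ h h'
    obtain ⟨hl, hg, hk, hv, e, he⟩ := TEquiv_node.1 h
    obtain ⟨hl', hg', hk', hv', e', he'⟩ := TEquiv_node.1 h'
    refine TEquiv_node.2 ⟨hl.trans hl', hg.trans hg', hk.trans hk', hv.trans hv', e.trans e',
      fun i => (BRel_iff TEquiv_refl).2 ?_⟩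
    obtain ⟨label_eq, subtree_equiv⟩ := (BRel_iff TEquiv_refl).1 (he i)
    obtain ⟨label_eq', subtree_equiv'⟩ := (BRel_iff TEquiv_refl).1 (he' (e i))
    exact ⟨label_eq.trans label_eq', ih _ (bs.get_mem _) subtree_equiv subtree_equiv'⟩

theorem TEquiv_equivalence : Equivalence (TEquiv (d := d)) :=
  ⟨TEquiv_refl, TEquiv_symm, TEquiv_trans⟩

theorem qk_eq_qk_iff {t t' : Tree d} : qk t = qk t' ↔ TEquiv t t' :=
  Quot.eq.trans TEquiv_equivalence.eqvGen_iff

theorem BRel_TEquiv_iff {b b' : Branch d} : BRel TEquiv b b' ↔ branchClass b = branchClass b' := by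
  rw [BRel_iff TEquiv_refl, branchClass, branchClass, Prod.mk.injEq, qk_eq_qk_iff]

theorem qk_qout (c : QTree d) : qk (qout c) = c :=
  (Quot.exists_rep c).choose_spec

section Tuples

variable {l g l' g' : Bool} {k k' : Multi d} {v v' : Bool} {n n' : ℕ}

theorem qk_node_ofFn_eq_iff {b : Fin n → Branch d} {b' : Fin n' → Branch d} :
    qk (node l g k v (List.ofFn b)) = qk (node l' g' k' v' (List.ofFn b')) ↔
      l = l' ∧ g = g' ∧ k = k' ∧ v = v' ∧
        (univ.val.map fun i => branchClass (b i)) = univ.val.map fun i => branchClass (b' i) := by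
  rw [qk_eq_qk_iff, TEquiv_node]
  simp only [BRel_TEquiv_iff]
  rw [exists_equiv_iff_map_univ_eq (g := fun i => branchClass ((List.ofFn b').get i)),
    map_univ_get_ofFn, map_univ_get_ofFn]

theorem SfacN_one : ∀ m, SfacN m (one false : Tree d) = 1
  | 0 => rfl
  | m + 1 => by simp [SfacN, one, atom, mfact]

theorem SfacN_succ_node (m : ℕ) (bs : List (Branch d)) :
    SfacN (m + 1) (node l g k v bs) =
      mfact k * symmetryNumber (univ.val.map fun i => branchClass (bs.get i)) *
        (bs.map fun b => SfacN m (branchSubtree b)).prod := by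
  have automorphisms : Nat.card {e : Equiv.Perm (Fin bs.length) //
      ∀ i, BRel TEquiv (bs.get (e i)) (bs.get i)} =
        symmetryNumber (univ.val.map fun i => branchClass (bs.get i)) := by
    simp only [BRel_TEquiv_iff, ← card_perm_comp_eq_self, funext_iff]
    rfl
  rw [SfacN, automorphisms]
  congr 3
  funext b
  rcases b with ⟨_, t⟩ | _
  · rfl
  · exact (SfacN_one m).symm

theorem SfacN_eq_Sfac {t : Tree d} : ∀ {m : ℕ}, sizeOf t ≤ m → SfacN m t = Sfac t := by
  induction t using Tree.induction with
  | node l g k v bs ih =>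
    intro m hm
    have unfold_of_le {m : ℕ} (hm : sizeOf (node l g k v bs) ≤ m) : SfacN m (node l g k v bs) =
        mfact k * symmetryNumber (univ.val.map fun i => branchClass (bs.get i)) *
          (bs.map fun b => Sfac (branchSubtree b)).prod := by
      obtain ⟨m, rfl⟩ : ∃ p, m = p + 1 := ⟨m - 1, by rw [node.sizeOf_spec] at hm; omega⟩
      have subtree_eq : ∀ b ∈ bs, SfacN m (branchSubtree b) = Sfac (branchSubtree b) :=
        fun b hb => ih b hb (Nat.le_of_lt_succ ((sizeOf_branchSubtree_lt hb l g k v).trans_le hm))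
      rw [SfacN_succ_node, List.map_congr_left subtree_eq]
    exact (unfold_of_le hm).trans (unfold_of_le le_rfl).symm

theorem Sfac_node (bs : List (Branch d)) :
    Sfac (node l g k v bs) =
      mfact k * symmetryNumber (univ.val.map fun i => branchClass (bs.get i)) *
        ∏ i, Sfac (branchSubtree (bs.get i)) := by
  have subtree_eq : ∀ b ∈ bs,
      SfacN (sizeOf (node l g k v bs)) (branchSubtree b) = Sfac (branchSubtree b) :=
    fun b hb => SfacN_eq_Sfac (sizeOf_branchSubtree_lt hb l g k v).le
  rw [← SfacN_eq_Sfac (Nat.le_succ _), SfacN_succ_node, List.map_congr_left subtree_eq,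
    ← List.ofFn_getElem_eq_map, List.prod_ofFn]
  rfl

theorem Sfac_eq_of_TEquiv : ∀ {t t' : Tree d}, TEquiv t t' → Sfac t = Sfac t' := by
  intro t
  induction t using Tree.induction with
  | node l g k v bs ih =>
    rintro ⟨l', g', k', v', bs'⟩ h
    obtain ⟨-, -, rfl, -, e, he⟩ := TEquiv_node.1 h
    have classes_eq : (univ.val.map fun i => branchClass (bs.get i)) =
        univ.val.map fun j => branchClass (bs'.get j) :=
      exists_equiv_iff_map_univ_eq.1 ⟨e, fun i => BRel_TEquiv_iff.1 (he i)⟩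
    have subtrees_eq : ∏ i, Sfac (branchSubtree (bs.get i)) =
        ∏ j, Sfac (branchSubtree (bs'.get j)) :=
      Fintype.prod_equiv e _ _ fun i =>
        ih _ (bs.get_mem i) ((BRel_iff TEquiv_refl).1 (he i)).2
    rw [Sfac_node, Sfac_node, subtrees_eq, classes_eq]

theorem SQ_qk (t : Tree d) : SQ (qk t) = Sfac t :=
  Sfac_eq_of_TEquiv (qk_eq_qk_iff.1 (qk_qout (qk t)))

theorem SQ_node_ofFn (b : Fin n → Branch d) :
    SQ (qk (node l g k v (List.ofFn b))) =
      mfact k * symmetryNumber (univ.val.map fun i => branchClass (b i)) *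
        ∏ i, SQ (qk (branchSubtree (b i))) := by
  rw [SQ_qk, Sfac_node, map_univ_get_ofFn]
  congr 1
  exact Fintype.prod_equiv (finCongr List.length_ofFn) _ _ fun i => by
    rw [SQ_qk, List.get_ofFn, finCongr_apply]

end Tuples

theorem Shape.mono {aP aG aPr aP' aG' aPr' : Bool} (hP : aP = true → aP' = true)
    (hG : aG = true → aG' = true) (hPr : aPr = true → aPr' = true) {t : Tree d}
    (h : Shape aP aG aPr t) : Shape aP' aG' aPr' t := by
  obtain ⟨n, hn⟩ := h
  refine ⟨n, ?_⟩
  induction n generalizing t with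
  | zero => exact hn
  | succ n ih =>
    obtain ⟨l, g, k, v, bs⟩ := t
    refine ⟨hn.1.imp_left hG, hn.2.1.imp_left hP, fun b hb => ?_⟩
    rcases hn.2.2 b hb with ⟨p, a, t, rfl, hp, ht⟩ | ⟨hgray, hb⟩
    · exact Or.inl ⟨p, a, t, rfl, hp.imp_left hPr, ih ht⟩
    · exact Or.inr ⟨hG hgray, hb⟩

theorem Shape.branchSubtree {aP aG aPr : Bool} {l g : Bool} {k : Multi d} {v : Bool}
    {bs : List (Branch d)} (h : Shape aP aG aPr (node l g k v bs)) {b : Branch d} (hb : b ∈ bs) :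
    Shape aP aG aPr (branchSubtree b) := by
  obtain ⟨_ | n, hn⟩ := h
  · exact hn.elim
  · rcases hn.2.2 b hb with ⟨p, a, t, rfl, -, ht⟩ | ⟨-, x, rfl⟩
    · exact ⟨n, ht⟩
    · exact ⟨1, Or.inr rfl, Or.inr rfl, by simp⟩

theorem IsT0g.poly_eq_zero {l g : Bool} {k : Multi d} {v : Bool} {bs : List (Branch d)}
    (h : IsT0g (node l g k v bs)) : k = 0 := by
  obtain ⟨_ | n, hn⟩ := h
  · exact hn.elim
  · exact hn.2.1.resolve_left Bool.false_ne_true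

theorem IsT0g.induction {P : ∀ t : Tree d, IsT0g t → Prop}
    (node : ∀ (l g v : Bool) (n : ℕ) (b : Fin n → Branch d)
      (ht : IsT0g (.node l g 0 v (List.ofFn b))) (hb : ∀ i, IsT0g (branchSubtree (b i))),
      (∀ i, P _ (hb i)) → P _ ht)
    {t : Tree d} (ht : IsT0g t) : P t ht := by
  induction t using Tree.induction with
  | node l g k v bs ih =>
    obtain rfl := ht.poly_eq_zero
    have subtree_isT0g (i : Fin bs.length) : IsT0g (branchSubtree (bs.get i)) :=
      Shape.branchSubtree ht (bs.get_mem i)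
    have ofFn_isT0g : IsT0g (.node l g 0 v (List.ofFn bs.get)) := by rwa [List.ofFn_get]
    have P_ofFn := node l g v _ bs.get ofFn_isT0g subtree_isT0g fun i =>
      ih _ (bs.get_mem i) (subtree_isT0g i)
    simpa only [List.ofFn_get] using P_ofFn

end Tree

section Series

open Flow.Tree

variable {d : ℕ}

/-- The edge prescribed by a branch specification. -/
def BSpec.label : BSpec d → EdgeLabel d
  | .ser p a _ => .inl (p, a)
  | .gray a k => .inr (a, k)

theorem branchClass_toBranch {s : BSpec d} {c : QTree d} (hc : s.coeff c ≠ 0) :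
    branchClass (s.toBranch c) = (s.label, c) := by
  rcases s with ⟨p, a, S⟩ | ⟨a, k⟩
  · exact Prod.ext rfl (qk_qout c)
  · exact Prod.ext rfl (of_not_not fun h => hc (if_neg (Ne.symm h)))

/-- The tree with the given root decorations whose `i`-th branch follows the specification `s i`
with subtree `c i`. -/
def specNode {n : ℕ} (l g : Bool) (k : Multi d) (v : Bool) (s : Fin n → BSpec d)
    (c : Fin n → QTree d) : Tree d :=
  .node l g k v (List.ofFn fun i => (s i).toBranch (c i))

variable {l g l' g' : Bool} {k k' : Multi d} {v v' : Bool} {n n' : ℕ}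

theorem nodeSer_ofFn (s : Fin n → BSpec d) (x : QTree d) :
    nodeSer l g k v (List.ofFn s) x =
      ∑ᶠ c : Fin n → QTree d, (∏ i, (s i).coeff (c i)) * dqT (specNode l g k v s c) x := by
  rw [nodeSer, List.length_ofFn, finsum_list_length_eq]
  refine finsum_congr fun c => ?_
  have zipWith_ofFn {β : Type} (f : BSpec d → QTree d → β) :
      List.zipWith f (List.ofFn s) (List.ofFn c) = List.ofFn fun i => f (s i) (c i) :=
    List.ext_getElem (by simp) (by simp)
  rw [zipWith_ofFn, zipWith_ofFn, List.prod_ofFn, specNode]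

section SpecNode

variable {s : Fin n → BSpec d} {c : Fin n → QTree d}

theorem qk_specNode_eq_iff {s' : Fin n' → BSpec d} {c' : Fin n' → QTree d}
    (hc : ∀ i, (s i).coeff (c i) ≠ 0) (hc' : ∀ i, (s' i).coeff (c' i) ≠ 0) :
    qk (specNode l g k v s c) = qk (specNode l' g' k' v' s' c') ↔
      l = l' ∧ g = g' ∧ k = k' ∧ v = v' ∧
        (univ.val.map fun i => ((s i).label, c i)) =
          univ.val.map fun i => ((s' i).label, c' i) := by
  simp only [specNode, qk_node_ofFn_eq_iff, branchClass_toBranch (hc _),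
    branchClass_toBranch (hc' _)]

theorem SQ_specNode (hc : ∀ i, (s i).coeff (c i) ≠ 0) :
    SQ (qk (specNode l g k v s c)) =
      mfact k * symmetryNumber (univ.val.map fun i => ((s i).label, c i)) * ∏ i, SQ (c i) := by
  have subtree_eq (i) : qk (branchSubtree ((s i).toBranch (c i))) = c i :=
    congrArg Prod.snd (branchClass_toBranch (hc i))
  simp only [specNode, SQ_node_ofFn, branchClass_toBranch (hc _), subtree_eq]

theorem prod_coeff_mul_dqT_specNode (hc : ∀ i, (s i).coeff (c i) ≠ 0) (c' : Fin n → QTree d) :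
    (∏ i, (s i).coeff (c' i)) * dqT (specNode l g k' v s c') (qk (specNode l g k v s c)) =
      ∑ᶠ _ : k = k' ∧ (univ.val.map fun i => ((s i).label, c i)) =
        univ.val.map fun i => ((s i).label, c' i), ∏ i, (s i).coeff (c' i) := by
  by_cases hprod : ∏ i, (s i).coeff (c' i) = 0
  · simp only [hprod, zero_mul, finsum_zero]
  · have hc' (i) : (s i).coeff (c' i) ≠ 0 := prod_ne_zero_iff.1 hprod i (mem_univ i)
    simp only [dqT, qk_specNode_eq_iff hc hc', true_and, mul_ite, mul_one, mul_zero, finsum_eq_if]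

theorem nodeSer_specNode_of_ne (hc : ∀ i, (s i).coeff (c i) ≠ 0) (hk : k' ≠ k) :
    nodeSer l g k' v (List.ofFn s) (qk (specNode l g k v s c)) = 0 := by
  simp only [nodeSer_ofFn, prod_coeff_mul_dqT_specNode hc, hk.symm, false_and,
    finsum_false, finsum_zero]

end SpecNode

theorem nodeSer_specNode_mul_symmetryNumber {α : Type*} {a : Fin n → α} {spec : α → BSpec d}
    {c : Fin n → QTree d}
    (hsep : ∀ i j x, (spec (a i)).label = (spec (a j)).label →
      (spec (a i)).coeff x ≠ 0 → (spec (a j)).coeff x ≠ 0 → a i = a j)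
    (hc : ∀ i, (spec (a i)).coeff (c i) ≠ 0) :
    nodeSer l g k v (List.ofFn fun i => spec (a i))
          (qk (specNode l g k v (fun i => spec (a i)) c)) *
        symmetryNumber (univ.val.map fun i => ((spec (a i)).label, c i)) =
      symmetryNumber (univ.val.map a) * ∏ i, (spec (a i)).coeff (c i) := by
  simp only [nodeSer_ofFn, prod_coeff_mul_dqT_specNode hc, true_and]
  exact finsum_prod_mul_symmetryNumber (label := fun x => (spec x).label)
    (w := fun x => (spec x).coeff) hsep hc

theorem exists_eq_specNode_of_nodeSer_ne_zero {s : Fin n → BSpec d} {x : QTree d}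
    (h : nodeSer l g k v (List.ofFn s) x ≠ 0) :
    ∃ c : Fin n → QTree d, (∀ i, (s i).coeff (c i) ≠ 0) ∧ x = qk (specNode l g k v s c) := by
  rw [nodeSer_ofFn] at h
  obtain ⟨c, hterm⟩ := exists_ne_zero_of_finsum_ne_zero h
  refine ⟨c, fun i => prod_ne_zero_iff.1 (left_ne_zero_of_mul hterm) i (mem_univ i), ?_⟩
  by_contra hx
  exact right_ne_zero_of_mul hterm (if_neg hx)

end Series

section Localisation

open Flow.Tree

variable {d : ℕ} {Mloc : QTree d → Ser d}

/-- What `M_loc` does to a branch of a given class: the subtree is replaced by its image under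
`M_loc`, while grey leaves are kept. -/
def locSpec (Mloc : QTree d → Ser d) : EdgeLabel d × QTree d → BSpec d
  | (.inl (p, a), x) => .ser p a (Mloc x)
  | (.inr (a, k), _) => .gray a k

theorem locSpec_label (q : EdgeLabel d × QTree d) : (locSpec Mloc q).label = q.1 := by
  rcases q with ⟨_ | _, _⟩ <;> rfl

theorem branchClass_eq_of_coeff_ne_zero {b b' : Branch d} {x : QTree d}
    (hsep : Mloc (qk (branchSubtree b)) x ≠ 0 → Mloc (qk (branchSubtree b')) x ≠ 0 →
      qk (branchSubtree b) = qk (branchSubtree b'))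
    (hlabel : (locSpec Mloc (branchClass b)).label = (locSpec Mloc (branchClass b')).label)
    (hx : (locSpec Mloc (branchClass b)).coeff x ≠ 0)
    (hx' : (locSpec Mloc (branchClass b')).coeff x ≠ 0) : branchClass b = branchClass b' := by
  rw [locSpec_label, locSpec_label] at hlabel
  refine Prod.ext hlabel ?_
  rcases b with _ | _ <;> rcases b' with _ | _
  · exact hsep hx hx'
  · cases hlabel
  · cases hlabel
  · rfl

theorem coeff_mul_SQ_of_coeff_ne_zero {b : Branch d}
    (h : ∀ x, Mloc (qk (branchSubtree b)) x ≠ 0 →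
      Mloc (qk (branchSubtree b)) x * SQ x = SQ (qk (branchSubtree b)))
    {x : QTree d} (hx : (locSpec Mloc (branchClass b)).coeff x ≠ 0) :
    (locSpec Mloc (branchClass b)).coeff x * SQ x = SQ (qk (branchSubtree b)) := by
  rcases b with _ | ak
  · exact h x hx
  · obtain rfl : x = qk (one false) := of_not_not fun hne => hx (if_neg hne)
    have coeff_one : (locSpec Mloc (branchClass (.inr ak))).coeff (qk (one false)) = 1 := if_pos rfl
    exact (congrArg (· * _) coeff_one).trans (one_mul _)

variable {l g v : Bool} {n : ℕ} {b : Fin n → Branch d}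

/-- The specifications of the branches of `M_loc (ζ_l Y^𝔳 ∏ᵢ bᵢ)` at the root. -/
def locSpecs (Mloc : QTree d → Ser d) (b : Fin n → Branch d) (i : Fin n) : BSpec d :=
  locSpec Mloc (branchClass (b i))

theorem MlocEqs.apply_node (hMloc : MlocEqs Mloc) (ht : IsT0g (node l g 0 v (List.ofFn b)))
    (x : QTree d) :
    Mloc (qk (node l g 0 v (List.ofFn b))) x = ∑ᶠ k : Multi d, 1 / (mfact k : ℝ) *
      nodeSer l g k v (List.ofFn (locSpecs Mloc b)) x := by
  rw [hMloc l g v _ ht, List.map_ofFn]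
  refine finsum_congr fun k => ?_
  congr 3
  funext i
  rcases hb : b i with _ | _ <;>
    simp [hb, locSpecs, locSpec, branchClass, branchLabel, branchSubtree]

theorem MlocEqs.exists_eq_specNode (hMloc : MlocEqs Mloc)
    (ht : IsT0g (node l g 0 v (List.ofFn b))) {x : QTree d}
    (hx : Mloc (qk (node l g 0 v (List.ofFn b))) x ≠ 0) :
    ∃ (k : Multi d) (c : Fin n → QTree d),
      (∀ i, (locSpecs Mloc b i).coeff (c i) ≠ 0) ∧
        x = qk (specNode l g k v (locSpecs Mloc b) c) := by
  rw [hMloc.apply_node ht] at hx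
  obtain ⟨k, hk⟩ := exists_ne_zero_of_finsum_ne_zero hx
  exact ⟨k, exists_eq_specNode_of_nodeSer_ne_zero (right_ne_zero_of_mul hk)⟩

theorem MlocEqs.qk_eq_of_apply_ne_zero (hMloc : MlocEqs Mloc) {t : Tree d} (ht : IsT0g t) :
    ∀ {t' : Tree d} {x : QTree d}, IsT0g t' → Mloc (qk t) x ≠ 0 → Mloc (qk t') x ≠ 0 →
      qk t = qk t' := by
  induction ht using IsT0g.induction with | node l g v n b ht _ ih =>
  intro t' x ht' hx hx'
  induction ht' using IsT0g.induction with | node l' g' v' n' b' ht' hb' =>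
  obtain ⟨k, c, hc, rfl⟩ := hMloc.exists_eq_specNode ht hx
  obtain ⟨k', c', hc', hcc'⟩ := hMloc.exists_eq_specNode ht' hx'
  obtain ⟨hl, hg, -, hv, hmap⟩ := (qk_specNode_eq_iff hc hc').1 hcc'
  obtain ⟨e, he⟩ := exists_equiv_iff_map_univ_eq.2 hmap
  refine qk_node_ofFn_eq_iff.2 ⟨hl, hg, rfl, hv, exists_equiv_iff_map_univ_eq.1 ⟨e, fun i => ?_⟩⟩
  have value_eq : c i = c' (e i) := congrArg Prod.snd (he i)
  exact branchClass_eq_of_coeff_ne_zero (ih i (hb' _)) (congrArg Prod.fst (he i)) (hc i)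
    (value_eq ▸ hc' (e i))

theorem MlocEqs.apply_specNode_mul_mfact (hMloc : MlocEqs Mloc)
    (ht : IsT0g (node l g 0 v (List.ofFn b))) {k : Multi d} {c : Fin n → QTree d}
    (hc : ∀ i, (locSpecs Mloc b i).coeff (c i) ≠ 0) :
    Mloc (qk (node l g 0 v (List.ofFn b))) (qk (specNode l g k v (locSpecs Mloc b) c)) * mfact k =
      nodeSer l g k v (List.ofFn (locSpecs Mloc b))
        (qk (specNode l g k v (locSpecs Mloc b) c)) := by
  have mfact_ne_zero : (mfact k : ℝ) ≠ 0 :=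
    Nat.cast_ne_zero.2 (prod_ne_zero_iff.2 fun i _ => (k i).factorial_ne_zero)
  rw [hMloc.apply_node ht, finsum_eq_single _ k fun k' hk => by
    rw [nodeSer_specNode_of_ne hc hk, mul_zero]]
  field_simp

theorem MlocEqs.apply_specNode_mul_symmetryNumber (hMloc : MlocEqs Mloc)
    (ht : IsT0g (node l g 0 v (List.ofFn b))) (hb : ∀ i, IsT0g (branchSubtree (b i)))
    {k : Multi d} {c : Fin n → QTree d} (hc : ∀ i, (locSpecs Mloc b i).coeff (c i) ≠ 0) :
    Mloc (qk (node l g 0 v (List.ofFn b))) (qk (specNode l g k v (locSpecs Mloc b) c)) * mfact k *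
        symmetryNumber (univ.val.map fun i => ((locSpecs Mloc b i).label, c i)) =
      symmetryNumber (univ.val.map fun i => branchClass (b i)) *
        ∏ i, (locSpecs Mloc b i).coeff (c i) := by
  rw [hMloc.apply_specNode_mul_mfact ht hc]
  exact nodeSer_specNode_mul_symmetryNumber (fun i j x => branchClass_eq_of_coeff_ne_zero
    (hMloc.qk_eq_of_apply_ne_zero (hb i) (hb j))) hc

theorem localisation_symmetry_factors_general (hMloc : MlocEqs Mloc) {t : Tree d} (ht : IsT0g t)
    {x : QTree d} (hx : Mloc (qk t) x ≠ 0) : Mloc (qk t) x * SQ x = Sfac t := by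
  rw [← SQ_qk]
  induction ht using IsT0g.induction generalizing x with | node l g v n b ht hb ih =>
  obtain ⟨k, c, hc, rfl⟩ := hMloc.exists_eq_specNode ht hx
  have subtrees_eq : (∏ i, (locSpecs Mloc b i).coeff (c i)) * ∏ i, (SQ (c i) : ℝ) =
      ∏ i, (SQ (qk (branchSubtree (b i))) : ℝ) := by
    rw [← prod_mul_distrib]
    exact prod_congr rfl fun i _ => coeff_mul_SQ_of_coeff_ne_zero (fun _ => ih i) (hc i)
  have mfact_zero : mfact (0 : Multi d) = 1 := by simp [mfact]
  rw [SQ_specNode hc, SQ_node_ofFn, mfact_zero, one_mul]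
  push_cast
  rw [← subtrees_eq, ← mul_assoc, ← mul_assoc, ← mul_assoc,
    hMloc.apply_specNode_mul_symmetryNumber ht hb hc]

end Localisation

/-- For every `τ ∈ T_0`, writing `M_loc τ = Σ_i a_i τ_i`
with pairwise distinct decorated trees `τ_i ∈ T_0^X` and coefficients `a_i`,
one has `M_loc τ / S(τ) = Σ_i τ_i / S(τ_i)`; equivalently,
`a_i · S(τ_i) = S(τ)` for every `i`.  Here the coefficient `a_i` of the
(non-planar) tree `c` in `M_loc τ` is `Mloc (qk τ) c`. -/
theorem localisation_symmetry_factors {d : ℕ}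
    (Mloc : QTree d → Ser d) (hMloc : MlocEqs Mloc) :
    ∀ t : Tree d, Tree.IsT0 t → ∀ c : QTree d, Mloc (qk t) c ≠ 0 →
      Mloc (qk t) c * (SQ c : ℝ) = (Tree.Sfac t : ℝ) :=
  fun _ ht _ hc => localisation_symmetry_factors_general hMloc (ht.mono id (fun _ => rfl) id) hc

end Flow
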